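/- Ξ₆[δ] is independent of the choice of triad: for each even characteristic δ, with {k₁,k₂,k₃} the triad of odd characteristics assigned to δ and {k₄,k₅,k₆} the complementary indices in {1,…,6}, the complementary triad also satisfies δ = ν_{k₄}+ν_{k₅}+ν_{k₆} (mod 2), and for all τ ∈ H₂ one has Σ_{4≤i<j≤6} ⟨ν_{k_i}|ν_{k_j}⟩ · Π_{m=1,2,3} θ⁴[ν_{k_i}+ν_{k_j}+ν_{k_m}](τ) = Ξ₆[δ](τ). -/

import Mathlib

open scoped BigOperators

namespace TwoLoop

/-- 2×2 complex matrices. -/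
abbrev Mat2 := Matrix (Fin 2) (Fin 2) ℂ

/-- The genus-2 Siegel upper half space: symmetric 2×2 complex matrices with
positive definite imaginary part. -/
def SiegelH2 : Set Mat2 := {τ | τ.transpose = τ ∧ (τ.map Complex.im).PosDef}

/-- A (half-integer) theta characteristic `[a;b]`, recorded by its rows `a, b ∈ {0,1}²`. -/
abbrev Char := (Fin 2 → ℤ) × (Fin 2 → ℤ)

/-- The theta constant `θ[a;b](τ) = Σ_{n ∈ ℤ²} exp(πi (n+a/2)ᵀ τ (n+a/2) + πi (n+a/2)·b)`. -/
noncomputable def theta (κ : Char) (τ : Mat2) : ℂ :=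
  ∑' n : Fin 2 → ℤ,
    Complex.exp ((Real.pi : ℂ) * Complex.I *
      ((∑ i, ∑ j, ((n i : ℂ) + (κ.1 i : ℂ) / 2) * τ i j * ((n j : ℂ) + (κ.1 j : ℂ) / 2))
        + ∑ i, ((n i : ℂ) + (κ.1 i : ℂ) / 2) * (κ.2 i : ℂ)))

/-- The ten even characteristics δ₁,…,δ₁₀. -/
def δev : Fin 10 → Char :=
  ![(![0,0], ![0,0]), (![0,0], ![0,1]), (![0,0], ![1,0]), (![0,0], ![1,1]),
    (![0,1], ![0,0]), (![0,1], ![1,0]), (![1,0], ![0,0]), (![1,0], ![0,1]),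
    (![1,1], ![0,0]), (![1,1], ![1,1])]

/-- The six odd characteristics ν₁,…,ν₆. -/
def νodd : Fin 6 → Char :=
  ![(![0,1], ![0,1]), (![1,0], ![1,0]), (![0,1], ![1,1]),
    (![1,0], ![1,1]), (![1,1], ![0,1]), (![1,1], ![1,0])]

/-- `Θ[ε](τ) = θ[ε;0](2τ)`. -/
noncomputable def Θf (ε : Fin 2 → ℤ) (τ : Mat2) : ℂ := theta (ε, ![0,0]) ((2 : ℂ) • τ)

noncomputable def P0 (τ : Mat2) : ℂ :=
  Θf ![0,0] τ ^ 4 + Θf ![0,1] τ ^ 4 + Θf ![1,0] τ ^ 4 + Θf ![1,1] τ ^ 4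
noncomputable def P1 (τ : Mat2) : ℂ :=
  2 * (Θf ![0,0] τ ^ 2 * Θf ![0,1] τ ^ 2 + Θf ![1,0] τ ^ 2 * Θf ![1,1] τ ^ 2)
noncomputable def P2 (τ : Mat2) : ℂ :=
  2 * (Θf ![0,0] τ ^ 2 * Θf ![1,0] τ ^ 2 + Θf ![0,1] τ ^ 2 * Θf ![1,1] τ ^ 2)
noncomputable def P3 (τ : Mat2) : ℂ :=
  2 * (Θf ![0,0] τ ^ 2 * Θf ![1,1] τ ^ 2 + Θf ![0,1] τ ^ 2 * Θf ![1,0] τ ^ 2)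
noncomputable def P4 (τ : Mat2) : ℂ :=
  4 * (Θf ![0,0] τ * Θf ![0,1] τ * Θf ![1,0] τ * Θf ![1,1] τ)

/-- The vector `(P₀,…,P₄)`. -/
noncomputable def Pv : Fin 5 → Mat2 → ℂ := ![P0, P1, P2, P3, P4]

open MvPolynomial in
/-- The Igusa quartic as a polynomial in `x₀,…,x₄`. -/
noncomputable def I4poly : MvPolynomial (Fin 5) ℂ :=
  X 4 ^ 4 + X 4 ^ 2 * X 0 ^ 2 - X 4 ^ 2 * X 1 ^ 2 - X 4 ^ 2 * X 2 ^ 2 - X 4 ^ 2 * X 3 ^ 2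
    + X 1 ^ 2 * X 2 ^ 2 + X 1 ^ 2 * X 3 ^ 2 + X 2 ^ 2 * X 3 ^ 2
    - 2 * (X 0 * X 1 * X 2 * X 3)

/-- The signature `⟨κ|λ⟩ = exp(πi(a_κ·b_λ − b_κ·a_λ))`. -/
noncomputable def sig (κ lam : Char) : ℂ :=
  Complex.exp ((Real.pi : ℂ) * Complex.I *
    (((∑ i, κ.1 i * lam.2 i : ℤ) : ℂ) - ((∑ i, κ.2 i * lam.1 i : ℤ) : ℂ)))

/-- Componentwise mod-2 sum of characteristics. -/
def addChar (κ lam : Char) : Char :=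
  (fun i => (κ.1 i + lam.1 i) % 2, fun i => (κ.2 i + lam.2 i) % 2)

/-- For each even characteristic `δ_d`, the ordering `(k₁,…,k₆)` of `{1,…,6}` (0-indexed) whose
first three entries form the triad of odd characteristics with `δ_d = ν_{k₁}+ν_{k₂}+ν_{k₃}`
and whose last three are the complementary indices. -/
def triad : Fin 10 → Fin 6 → Fin 6 :=
  ![![0,3,5,1,2,4], ![0,1,5,2,3,4], ![0,1,4,2,3,5], ![0,3,4,1,2,5], ![0,1,3,2,4,5],
    ![0,4,5,1,2,3], ![0,1,2,3,4,5], ![0,2,3,1,4,5], ![0,2,5,1,3,4], ![0,2,4,1,3,5]]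

/-- D'Hoker–Phong's `Ξ₆[δ]`. -/
noncomputable def Xi6 (d : Fin 10) (τ : Mat2) : ℂ :=
  ∑ i : Fin 3, ∑ j : Fin 3,
    if i < j then
      sig (νodd (triad d (Fin.castLE (by norm_num) i))) (νodd (triad d (Fin.castLE (by norm_num) j))) *
        ∏ m : Fin 3,
          theta (addChar (addChar (νodd (triad d (Fin.castLE (by norm_num) i)))
              (νodd (triad d (Fin.castLE (by norm_num) j))))
            (νodd (triad d (⟨m.1 + 3, by omega⟩ : Fin 6)))) τ ^ 4
    else 0

/-- The formal derivative `∂I₄/∂θ⁴[δ]` of the Igusa quartic with respect to the ten fourth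
powers of the even theta constants, regarded as independent variables. -/
noncomputable def Dd (d : Fin 10) (τ : Mat2) : ℂ :=
  (1 / 48 : ℂ) *
    (theta (δev d) τ ^ 4 * (∑ d' : Fin 10, theta (δev d') τ ^ 8) - 4 * theta (δev d) τ ^ 12)

/-- `f_δ = 2Ξ₆[δ] − ∂I₄/∂θ⁴[δ]`. -/
noncomputable def fδ (d : Fin 10) (τ : Mat2) : ℂ := 2 * Xi6 d τ - Dd d τ

/-- `Ψ₆`, the weight-6 modular form. -/
noncomputable def Ψ6 (τ : Mat2) : ℂ :=
  P0 τ ^ 3 - 9 * P0 τ * (P1 τ ^ 2 + P2 τ ^ 2 + P3 τ ^ 2 - 4 * P4 τ ^ 2)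
    + 54 * (P1 τ * P2 τ * P3 τ)

/-- `Ψ₁₀`, the weight-10 modular form. -/
noncomputable def Ψ10 (τ : Mat2) : ℂ := ∏ d : Fin 10, theta (δev d) τ ^ 2

/-- A characteristic is even when `a·b` is even. -/
def IsEvenChar (κ : Char) : Prop := (∑ i, κ.1 i * κ.2 i) % 2 = 0

/-- A characteristic is odd when `a·b` is odd. -/
def IsOddChar (κ : Char) : Prop := (∑ i, κ.1 i * κ.2 i) % 2 = 1

/-!
Let `κ₁, κ₂, κ₃` and `λ₁, λ₂, λ₃` be complementary triads of odd characteristics. The six odd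
characteristics sum to zero, so both triads sum to `δ`, and `κᵢ + κⱼ = δ + κᵣ` for `{i, j, r} =
{1, 2, 3}`. Arrange the terms `⟨κᵢ|λₘ⟩ θ⁴[δ+κᵢ+λₘ]` in a 3×3 square. A Riemann relation, applied at
the odd characteristic `κᵢ`, says that each row sums to `θ⁴[δ]`, and likewise each column. The
triples of odd characteristics are azygetic, so up to a global sign `Ξ₆[δ]` is the sum of the
products of the rows, while the complementary triad gives the sum of the products of the columns;
the two agree for any 3×3 square with constant row and column sums.

The Riemann relation is a Fourier duality. Splitting pairs of lattice points by parity writes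
`θ²[a;b](τ)` as a quadratic form in the second-order theta constants, hence `θ⁴` as a quartic form
which is invariant, up to a power of 2, under the symplectic Fourier transform on characteristics.
-/

open Matrix Function

local notation "ψ" => (ZMod.stdAddChar : AddChar (ZMod 2) ℂ)

theorem sum_prod_rows_eq_sum_prod_cols_of_semimagic {R : Type*} [CommRing R]
    (M : Matrix (Fin 3) (Fin 3) R) (s : R) (hrow : ∀ i, ∑ j, M i j = s)
    (hcol : ∀ j, ∑ i, M i j = s) :
    ∑ i, ∏ j, M i j = ∑ j, ∏ i, M i j := by
  simp only [Fin.sum_univ_three, Fin.prod_univ_three] at hrow hcol ⊢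
  have h02 : M 0 2 = s - M 0 0 - M 0 1 := by linear_combination hrow 0
  have h12 : M 1 2 = s - M 1 0 - M 1 1 := by linear_combination hrow 1
  have h20 : M 2 0 = s - M 0 0 - M 1 0 := by linear_combination hcol 0
  have h21 : M 2 1 = s - M 0 1 - M 1 1 := by linear_combination hcol 1
  have h22 : M 2 2 = s - M 0 2 - M 1 2 := by linear_combination hcol 2
  rw [h22, h20, h21, h02, h12]
  ring

lemma sum_ite_lt_fin_three {M : Type*} [AddCommMonoid M] {f : Fin 3 → Fin 3 → M}
    (hf : ∀ i j, f i j = f j i) :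
    (∑ i, ∑ j, if i < j then f i j else 0) = ∑ i, f (i + 1) (i + 2) := by
  have hlt : (0 : Fin 3) < 1 ∧ (0 : Fin 3) < 2 ∧ (1 : Fin 3) < 2 := by decide
  simp only [Fin.sum_univ_three, lt_irrefl, hlt, hlt.1.not_gt, hlt.2.1.not_gt, hlt.2.2.not_gt,
    if_true, if_false, zero_add, add_zero]
  rw [hf 0 2]
  change _ = f 1 2 + f 2 0 + f 0 1
  abel

lemma add_eq_sum_add_fin_three {M : Type*} [AddCommGroup M] [Module (ZMod 2) M] (v : Fin 3 → M)
    (i : Fin 3) : v (i + 1) + v (i + 2) = ∑ j, v j + v i := by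
  rw [← Equiv.sum_comp (Equiv.addLeft i), Fin.sum_univ_three]
  simp only [Equiv.coe_addLeft, add_zero]
  rw [add_comm _ (v i), add_assoc, ← add_assoc, ZModModule.add_self, zero_add]

lemma exists_sum_add_add_eq_fin_three {M : Type*} [AddCommGroup M] [Module (ZMod 2) M]
    (v : Fin 3 → M) {i j : Fin 3} (hij : j ≠ i) : ∃ r, ∑ s, v s + v i + v j = v r := by
  rw [← add_eq_sum_add_fin_three v i]
  obtain rfl | rfl : j = i + 1 ∨ j = i + 2 := by decide +revert
  · exact ⟨i + 2, by rw [add_right_comm, ZModModule.add_self, zero_add]⟩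
  · exact ⟨i + 1, by rw [add_assoc, ZModModule.add_self, add_zero]⟩

lemma stdAddChar_two_intCast (k : ℤ) : ψ k = Complex.exp (Real.pi * Complex.I * k) := by
  rw [ZMod.stdAddChar_coe]
  congr 1
  push_cast
  ring

lemma stdAddChar_two_one : ψ 1 = -1 := by
  simpa using stdAddChar_two_intCast 1

lemma one_sub_stdAddChar_two (p : ZMod 2) : 1 - ψ p = if p = 1 then 2 else 0 := by
  obtain rfl | rfl : p = 0 ∨ p = 1 := by decide +revert
  · simp
  · norm_num [stdAddChar_two_one]

section Riemann

variable {ι : Type*}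

/-- Theta characteristics `[a;b]` modulo 2 in genus `card ι`, as a vector space over `ZMod 2`. -/
abbrev ModTwoChar (ι : Type*) := (ι → ZMod 2) × (ι → ZMod 2)

variable [Fintype ι]

/-- The parity `a·b` of a characteristic: `0` when even, `1` when odd. -/
def parity (x : ModTwoChar ι) : ZMod 2 := x.1 ⬝ᵥ x.2

/-- The symplectic (Weil) pairing, the polarization of `parity`; the sign `⟨κ|λ⟩` is its
exponential. -/
def pairing (x y : ModTwoChar ι) : ZMod 2 := x.1 ⬝ᵥ y.2 + x.2 ⬝ᵥ y.1

lemma pairing_comm (x y : ModTwoChar ι) : pairing x y = pairing y x := by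
  simp only [pairing, dotProduct_comm, add_comm]

lemma pairing_add_right (x y z : ModTwoChar ι) :
    pairing x (y + z) = pairing x y + pairing x z := by
  simp only [pairing, Prod.fst_add, Prod.snd_add, dotProduct_add]
  abel

lemma pairing_self (x : ModTwoChar ι) : pairing x x = 0 := by
  rw [pairing, dotProduct_comm, ZModModule.add_self]

lemma parity_add (x y : ModTwoChar ι) :
    parity (x + y) = parity x + parity y + pairing x y := by
  simp only [parity, pairing, Prod.fst_add, Prod.snd_add, dotProduct_add, add_dotProduct,
    dotProduct_comm y.1 x.2]
  abel

variable [DecidableEq ι]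

lemma sum_stdAddChar_dotProduct (c : ι → ZMod 2) :
    ∑ b, ψ (b ⬝ᵥ c) = if c = 0 then 2 ^ Fintype.card ι else 0 := by
  let dotRight : (ι → ZMod 2) →+ ZMod 2 := .mk' (· ⬝ᵥ c) fun _ _ => add_dotProduct ..
  have hzero : AddChar.compAddMonoidHom ψ dotRight = 0 ↔ c = 0 := by
    rw [AddChar.eq_zero_iff, ← dotProduct_eq_zero_iff]
    refine forall_congr' fun b => ?_
    rw [← AddChar.map_zero_eq_one ψ, AddChar.compAddMonoidHom_apply,
      ZMod.injective_stdAddChar.eq_iff, dotProduct_comm]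
    rfl
  classical
  simpa [hzero, dotRight] using AddChar.sum_eq_ite (AddChar.compAddMonoidHom ψ dotRight)

/-- The quartic form `∑ₛ f(s) f(s+a) f(s+c) f(s+a+c)`, a sum over the parallelograms with sides `a`
and `c`. -/
noncomputable def quarticForm (f : (ι → ZMod 2) → ℂ) (a c : ι → ZMod 2) : ℂ :=
  ∑ s, f s * f (s + a) * f (s + c) * f (s + a + c)

lemma quarticForm_comm (f : (ι → ZMod 2) → ℂ) (a c : ι → ZMod 2) :
    quarticForm f a c = quarticForm f c a := by
  refine Finset.sum_congr rfl fun s _ => ?_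
  rw [add_right_comm]
  ring

lemma quarticForm_add_self (f : (ι → ZMod 2) → ℂ) (a c : ι → ZMod 2) :
    quarticForm f a (c + a) = quarticForm f a c := by
  refine Finset.sum_congr rfl fun s _ => ?_
  rw [add_add_add_comm s a c a, ZModModule.add_self, add_zero, add_comm c a, ← add_assoc]
  ring

/-- The quartic in the second-order theta constants `f` that gives `θ⁴[x]`, see `theta_pow_four`. -/
noncomputable def thetaQuartic (f : (ι → ZMod 2) → ℂ) (x : ModTwoChar ι) : ℂ :=
  ∑ c, ψ (x.2 ⬝ᵥ c) * quarticForm f x.1 c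

variable (f : (ι → ZMod 2) → ℂ)

lemma stdAddChar_parity_mul_thetaQuartic (x : ModTwoChar ι) :
    ψ (parity x) * thetaQuartic f x = thetaQuartic f x := by
  rw [thetaQuartic, Finset.mul_sum]
  refine Fintype.sum_equiv (Equiv.addRight x.1) _ _ fun c => ?_
  rw [Equiv.coe_addRight, quarticForm_add_self, dotProduct_add, parity, dotProduct_comm x.1,
    AddChar.map_add_eq_mul]
  ring

lemma thetaQuartic_eq_zero {x : ModTwoChar ι} (hx : parity x = 1) : thetaQuartic f x = 0 := by
  have h := stdAddChar_parity_mul_thetaQuartic f x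
  rw [hx, stdAddChar_two_one] at h
  linear_combination (-1 / 2 : ℂ) * h

lemma sum_pairing_mul_thetaQuartic (κ : ModTwoChar ι) :
    ∑ x, ψ (pairing κ x) * thetaQuartic f x = 2 ^ Fintype.card ι * thetaQuartic f κ := by
  calc ∑ x, ψ (pairing κ x) * thetaQuartic f x
      = ∑ a, ψ (κ.2 ⬝ᵥ a) * ∑ c, quarticForm f a c * ∑ b, ψ (b ⬝ᵥ (c + κ.1)) := by
        simp only [Fintype.sum_prod_type, thetaQuartic, Finset.mul_sum]
        refine Finset.sum_congr rfl fun a _ => ?_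
        rw [Finset.sum_comm]
        refine Finset.sum_congr rfl fun c _ => Finset.sum_congr rfl fun b _ => ?_
        rw [pairing, dotProduct_add, dotProduct_comm κ.1, AddChar.map_add_eq_mul,
          AddChar.map_add_eq_mul]
        ring
    _ = 2 ^ Fintype.card ι * thetaQuartic f κ := by
        simp only [sum_stdAddChar_dotProduct, ← ZModModule.sub_eq_add, sub_eq_zero, mul_ite,
          mul_zero, Finset.sum_ite_eq', Finset.mem_univ, if_true, thetaQuartic, Finset.mul_sum]
        refine Finset.sum_congr rfl fun a _ => ?_
        rw [quarticForm_comm]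
        ring

/- The projector onto odd characteristics is `(1 - ψ ∘ parity) / 2`. Since `thetaQuartic f` lives on
even characteristics, the twist by `ψ ∘ parity` amounts to replacing `κ` by `α + κ`, so each of the
two terms is a full Fourier sum. -/
lemma one_sub_parity_mul_pairing_mul_thetaQuartic (κ α x : ModTwoChar ι) :
    (1 - ψ (parity x)) * (ψ (pairing κ x) * thetaQuartic f (α + x)) =
      ψ (pairing κ α) * (ψ (pairing κ (α + x)) * thetaQuartic f (α + x)) -
        ψ (pairing κ α + parity α) *
          (ψ (pairing (α + κ) (α + x)) * thetaQuartic f (α + x)) := by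
  have hκx : ψ (pairing κ x) = ψ (pairing κ α) * ψ (pairing κ (α + x)) := by
    rw [← AddChar.map_add_eq_mul, pairing_add_right, ← add_assoc, ZModModule.add_self, zero_add]
  have hα : ψ (parity α) * ψ (pairing (α + κ) (α + x)) =
      ψ (parity x) * ψ (pairing κ (α + x)) * ψ (parity (α + x)) := by
    simp only [← AddChar.map_add_eq_mul]
    rw [pairing_comm (α + κ), pairing_add_right, pairing_comm _ α, pairing_comm _ κ,
      pairing_add_right α, pairing_self, parity_add]
    congr 1
    linear_combination -parity x * CharTwo.two_eq_zero (R := ZMod 2)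
  rw [AddChar.map_add_eq_mul]
  linear_combination (1 - ψ (parity x)) * thetaQuartic f (α + x) * hκx +
    ψ (pairing κ α) * thetaQuartic f (α + x) * hα +
    ψ (pairing κ α) * ψ (parity x) * ψ (pairing κ (α + x)) *
      stdAddChar_parity_mul_thetaQuartic f (α + x)

theorem sum_odd_pairing_mul_thetaQuartic {κ : ModTwoChar ι}
    (hκ : parity κ = 1) (α : ModTwoChar ι) :
    2 * ∑ x with parity x = 1, ψ (pairing κ x) * thetaQuartic f (α + x) =
      2 ^ Fintype.card ι * thetaQuartic f (α + κ) := by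
  calc 2 * ∑ x with parity x = 1, ψ (pairing κ x) * thetaQuartic f (α + x)
      = ∑ x, (1 - ψ (parity x)) * (ψ (pairing κ x) * thetaQuartic f (α + x)) := by
        simp only [one_sub_stdAddChar_two, Finset.sum_filter, Finset.mul_sum, mul_ite, ite_mul,
          zero_mul, mul_zero]
    _ = ψ (pairing κ α) * ∑ x, ψ (pairing κ x) * thetaQuartic f x -
          ψ (pairing κ α + parity α) * ∑ x, ψ (pairing (α + κ) x) * thetaQuartic f x := by
        simp only [one_sub_parity_mul_pairing_mul_thetaQuartic, ← Finset.mul_sum,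
          Finset.sum_sub_distrib]
        congr 2
        · exact Equiv.sum_comp (Equiv.addLeft α) fun x => ψ (pairing κ x) * thetaQuartic f x
        · exact Equiv.sum_comp (Equiv.addLeft α) fun x => ψ (pairing (α + κ) x) * thetaQuartic f x
    _ = 2 ^ Fintype.card ι * (ψ (parity (α + κ)) * thetaQuartic f (α + κ)) := by
        rw [sum_pairing_mul_thetaQuartic, sum_pairing_mul_thetaQuartic,
          thetaQuartic_eq_zero f hκ, parity_add, hκ, pairing_comm κ α]
        simp only [AddChar.map_add_eq_mul, stdAddChar_two_one]
        ring
    _ = 2 ^ Fintype.card ι * thetaQuartic f (α + κ) := by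
        rw [stdAddChar_parity_mul_thetaQuartic]

lemma sq_sum_eq_thetaQuartic (x : ModTwoChar ι) :
    (∑ s, ψ (x.2 ⬝ᵥ s) * (f s * f (s + x.1))) ^ 2 = thetaQuartic f x := by
  calc (∑ s, ψ (x.2 ⬝ᵥ s) * (f s * f (s + x.1))) ^ 2
      = ∑ s, ∑ c, ψ (x.2 ⬝ᵥ s) * (f s * f (s + x.1)) *
          (ψ (x.2 ⬝ᵥ (s + c)) * (f (s + c) * f (s + c + x.1))) := by
        rw [sq, Finset.sum_mul_sum]
        exact Finset.sum_congr rfl fun s _ => (Equiv.sum_comp (Equiv.addLeft s) _).symm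
    _ = ∑ s, ∑ c, ψ (x.2 ⬝ᵥ c) * (f s * f (s + x.1) * f (s + c) * f (s + x.1 + c)) := by
        refine Finset.sum_congr rfl fun s _ => Finset.sum_congr rfl fun c _ => ?_
        have hsign : ψ (x.2 ⬝ᵥ s) * ψ (x.2 ⬝ᵥ (s + c)) = ψ (x.2 ⬝ᵥ c) := by
          rw [← AddChar.map_add_eq_mul, dotProduct_add, ← add_assoc, ZModModule.add_self, zero_add]
        rw [add_right_comm s c, ← hsign]
        ring
    _ = thetaQuartic f x := by
        rw [Finset.sum_comm]
        simp only [thetaQuartic, quarticForm, Finset.mul_sum]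

end Riemann

section Theta

open scoped MatrixOrder in
lemma exists_pos_mul_dotProduct_le_of_posDef {n : Type*} [Fintype n] [Nonempty n]
    {A : Matrix n n ℝ} (hA : A.PosDef) :
    ∃ c > 0, ∀ x : n → ℝ, c * (x ⬝ᵥ x) ≤ x ⬝ᵥ A *ᵥ x := by
  classical
  obtain ⟨c, hc, hcA⟩ := (CFC.exists_pos_algebraMap_le_iff hA.isHermitian).2
    fun _ hx => hA.isStrictlyPositive.spectrum_pos hx
  refine ⟨c, hc, fun x => ?_⟩
  have h := (Matrix.le_iff.1 hcA).dotProduct_mulVec_nonneg x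
  simpa [sub_mulVec, Algebra.algebraMap_eq_smul_one, smul_mulVec] using h

lemma summable_exp_neg_mul_sq_add {c : ℝ} (hc : 0 < c) (a : Fin 2 → ℝ) :
    Summable fun n : Fin 2 → ℤ =>
      Real.exp (-Real.pi * (c * ((fun i => n i + a i) ⬝ᵥ fun i => n i + a i))) := by
  have hsummable (b : ℝ) : Summable fun n : ℤ => Real.exp (-Real.pi * (n + b) ^ 2 * c) := by
    refine (HurwitzKernelBounds.summable_f_int 0 b hc).congr fun n => ?_
    rw [HurwitzKernelBounds.f_int, pow_zero, one_mul]
  have hprod := (hsummable (a 0)).mul_of_nonneg (hsummable (a 1))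
    (fun _ => (Real.exp_pos _).le) fun _ => (Real.exp_pos _).le
  refine ((finTwoArrowEquiv ℤ).summable_iff.2 hprod).congr fun n => ?_
  rw [Function.comp_apply, ← Real.exp_add, vec2_dotProduct]
  congr 1
  change -Real.pi * (n 0 + a 0) ^ 2 * c + -Real.pi * (n 1 + a 1) ^ 2 * c = _
  ring

/-- The summand of the series defining `theta`. -/
noncomputable def thetaTerm (κ : Char) (τ : Mat2) (n : Fin 2 → ℤ) : ℂ :=
  Complex.exp ((Real.pi : ℂ) * Complex.I *
    ((∑ i, ∑ j, ((n i : ℂ) + (κ.1 i : ℂ) / 2) * τ i j * ((n j : ℂ) + (κ.1 j : ℂ) / 2))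
      + ∑ i, ((n i : ℂ) + (κ.1 i : ℂ) / 2) * (κ.2 i : ℂ)))

lemma theta_eq_tsum_thetaTerm (κ : Char) (τ : Mat2) : theta κ τ = ∑' n, thetaTerm κ τ n := rfl

lemma norm_thetaTerm (κ : Char) (τ : Mat2) (n : Fin 2 → ℤ) :
    ‖thetaTerm κ τ n‖ = Real.exp (-Real.pi * ((fun i => n i + (κ.1 i : ℝ) / 2) ⬝ᵥ
      τ.map Complex.im *ᵥ fun i => n i + (κ.1 i : ℝ) / 2)) := by
  have hreal (i : Fin 2) : (n i : ℂ) + (κ.1 i : ℂ) / 2 = ((n i + (κ.1 i : ℝ) / 2 : ℝ) : ℂ) := by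
    push_cast
    rfl
  rw [thetaTerm, Complex.norm_exp]
  simp only [hreal, ← Complex.ofReal_intCast (κ.2 _), vec2_dotProduct, mulVec, map_apply,
    Fin.sum_univ_two]
  congr 1
  simp only [Complex.mul_re, Complex.mul_im, Complex.add_re, Complex.add_im, Complex.ofReal_re,
    Complex.ofReal_im, Complex.I_re, Complex.I_im]
  ring

lemma summable_norm_thetaTerm {τ : Mat2} (hτ : τ ∈ SiegelH2) (κ : Char) :
    Summable fun n => ‖thetaTerm κ τ n‖ := by
  obtain ⟨c, hc, hle⟩ := exists_pos_mul_dotProduct_le_of_posDef hτ.2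
  refine .of_nonneg_of_le (fun _ => norm_nonneg _) (fun n => ?_)
    (summable_exp_neg_mul_sq_add hc fun i => (κ.1 i : ℝ) / 2)
  rw [norm_thetaTerm, Real.exp_le_exp]
  exact mul_le_mul_of_nonpos_left (hle _) (neg_nonpos.2 Real.pi_pos.le)

lemma two_smul_mem_siegelH2 {τ : Mat2} (hτ : τ ∈ SiegelH2) : (2 : ℂ) • τ ∈ SiegelH2 := by
  refine ⟨by rw [transpose_smul, hτ.1], ?_⟩
  have him : ((2 : ℂ) • τ).map Complex.im = (2 : ℝ) • τ.map Complex.im := by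
    ext i j
    simp
  rw [him]
  exact hτ.2.smul two_pos

lemma theta_add_two_mul (a k b : Fin 2 → ℤ) (τ : Mat2) :
    theta (fun i => a i + 2 * k i, b) τ = theta (a, b) τ := by
  rw [theta_eq_tsum_thetaTerm, theta_eq_tsum_thetaTerm,
    ← (Equiv.addRight k).tsum_eq (thetaTerm (a, b) τ)]
  refine tsum_congr fun n => ?_
  have hshift (i : Fin 2) : (n i : ℂ) + ((a i + 2 * k i : ℤ) : ℂ) / 2 =
      ((n i + k i : ℤ) : ℂ) + (a i : ℂ) / 2 := by
    push_cast
    ring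
  simp only [thetaTerm, hshift, Equiv.coe_addRight, Pi.add_apply]

/-- Reduction of an integral characteristic modulo 2. -/
def modTwo (κ : Char) : ModTwoChar (Fin 2) := (fun i => κ.1 i, fun i => κ.2 i)

/-- The second-order theta constants `Θ[s](τ)`, indexed by residues `s` modulo 2 through their
representatives `0` and `1`. -/
noncomputable def secondOrderTheta (τ : Mat2) (s : Fin 2 → ZMod 2) : ℂ :=
  Θf (fun i => (s i).val) τ

lemma Θf_eq_secondOrderTheta {ε : Fin 2 → ℤ} {s : Fin 2 → ZMod 2} (h : ∀ i, (ε i : ZMod 2) = s i)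
    (τ : Mat2) : Θf ε τ = secondOrderTheta τ s := by
  have hε : ε = fun i => ((s i).val : ℤ) + 2 * (ε i / 2) := by
    funext i
    have hval : ((s i).val : ℤ) = ε i % 2 := by rw [← h, ZMod.val_intCast]; rfl
    omega
  rw [secondOrderTheta, Θf, Θf, hε, theta_add_two_mul]

/-- Pairs of lattice points written as `(r + s + e, r - s)` with `e ∈ {0,1}²` the parity of their
difference: the change of variables that splits `θ²` into products of second-order theta series. -/
def parityEquiv :
    (Fin 2 → ZMod 2) × (Fin 2 → ℤ) × (Fin 2 → ℤ) ≃ (Fin 2 → ℤ) × (Fin 2 → ℤ) where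
  toFun x := (fun i => x.2.1 i + x.2.2 i + (x.1 i).val, fun i => x.2.1 i - x.2.2 i)
  invFun y := (fun i => (y.1 i - y.2 i : ℤ), fun i => y.2 i + (y.1 i - y.2 i) / 2,
    fun i => (y.1 i - y.2 i) / 2)
  left_inv := by
    rintro ⟨e, r, s⟩
    have hsub (i : Fin 2) : r i + s i + (e i).val - (r i - s i) = 2 * s i + (e i).val := by ring
    have hdiv (i : Fin 2) : (2 * s i + (e i).val) / 2 = s i := by
      have hlt := ZMod.val_lt (e i)
      omega
    have hcast (i : Fin 2) : ((2 * s i + (e i).val : ℤ) : ZMod 2) = e i := by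
      rw [Int.cast_add, Int.cast_mul, Int.cast_ofNat, CharTwo.two_eq_zero (R := ZMod 2), zero_mul,
        zero_add, Int.cast_natCast, ZMod.natCast_zmod_val]
    simp only [hsub, hdiv, hcast, sub_add_cancel]
  right_inv := by
    rintro ⟨m, n⟩
    have hval (i : Fin 2) : (((m i - n i : ℤ) : ZMod 2).val : ℤ) = (m i - n i) % 2 :=
      ZMod.val_intCast _
    simp only [hval, add_sub_cancel_right, Prod.mk.injEq, and_true]
    funext i
    omega

lemma thetaTerm_mul_thetaTerm {τ : Mat2} (hτ : τᵀ = τ) (κ : Char)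
    (e : Fin 2 → ZMod 2) (r s : Fin 2 → ℤ) :
    thetaTerm κ τ (parityEquiv (e, r, s)).1 * thetaTerm κ τ (parityEquiv (e, r, s)).2 =
      ψ ((modTwo κ).2 ⬝ᵥ (e + (modTwo κ).1)) *
        (thetaTerm (fun i => (e i).val + κ.1 i, ![0, 0]) ((2 : ℂ) • τ) r *
          thetaTerm (fun i => (e i).val, ![0, 0]) ((2 : ℂ) • τ) s) := by
  have hsymm : τ 1 0 = τ 0 1 := congrFun (congrFun hτ 0) 1
  have hsign : ψ ((modTwo κ).2 ⬝ᵥ (e + (modTwo κ).1)) = Complex.exp (Real.pi * Complex.I *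
      (∑ i, κ.2 i * (2 * r i + (e i).val + κ.1 i) : ℤ)) := by
    rw [← stdAddChar_two_intCast]
    congr 1
    have htwo : (2 : ZMod 2) = 0 := CharTwo.two_eq_zero
    simp [dotProduct, modTwo, htwo]
  rw [hsign]
  simp only [thetaTerm, parityEquiv, Equiv.coe_fn_mk, ← Complex.exp_add, Fin.sum_univ_two,
    Matrix.smul_apply, smul_eq_mul, hsymm, cons_val_zero, cons_val_one]
  congr 1
  push_cast
  ring

theorem theta_sq {τ : Mat2} (hτ : τ ∈ SiegelH2) (κ : Char) :
    theta κ τ ^ 2 = ∑ s, ψ ((modTwo κ).2 ⬝ᵥ s) *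
      (secondOrderTheta τ s * secondOrderTheta τ (s + (modTwo κ).1)) := by
  have hκ := summable_norm_thetaTerm hτ κ
  have h2 := summable_norm_thetaTerm (two_smul_mem_siegelH2 hτ)
  calc theta κ τ ^ 2
      = ∑' y : (Fin 2 → ℤ) × (Fin 2 → ℤ), thetaTerm κ τ y.1 * thetaTerm κ τ y.2 := by
        rw [sq, theta_eq_tsum_thetaTerm, tsum_mul_tsum_of_summable_norm hκ hκ]
    _ = ∑ e, ∑' x : (Fin 2 → ℤ) × (Fin 2 → ℤ), thetaTerm κ τ (parityEquiv (e, x)).1 *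
          thetaTerm κ τ (parityEquiv (e, x)).2 := by
        rw [← parityEquiv.tsum_eq, ← tsum_fintype (L := .unconditional _)]
        exact (parityEquiv.summable_iff.2 (summable_mul_of_summable_norm hκ hκ)).tsum_prod
    _ = ∑ e, ψ ((modTwo κ).2 ⬝ᵥ (e + (modTwo κ).1)) *
          (secondOrderTheta τ (e + (modTwo κ).1) * secondOrderTheta τ e) := by
        refine Finset.sum_congr rfl fun e _ => ?_
        simp only [thetaTerm_mul_thetaTerm hτ.1]
        rw [tsum_mul_left, ← tsum_mul_tsum_of_summable_norm (h2 _) (h2 _),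
          ← Θf_eq_secondOrderTheta (ε := fun i => (e i).val + κ.1 i) (by simp [modTwo])]
        rfl
    _ = _ := by
        refine Fintype.sum_equiv (Equiv.addRight (modTwo κ).1) _ _ fun e => ?_
        rw [Equiv.coe_addRight, add_assoc e, ZModModule.add_self, add_zero]

theorem theta_pow_four {τ : Mat2} (hτ : τ ∈ SiegelH2) (κ : Char) :
    theta κ τ ^ 4 = thetaQuartic (secondOrderTheta τ) (modTwo κ) := by
  rw [← sq_sum_eq_thetaQuartic, ← theta_sq hτ, ← pow_mul]

end Theta

section Triads

lemma modTwo_addChar (κ lam : Char) : modTwo (addChar κ lam) = modTwo κ + modTwo lam := by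
  have hmod (n : ℤ) : ((n % 2 : ℤ) : ZMod 2) = n := ZMod.intCast_mod n 2
  simp only [modTwo, addChar, hmod, Int.cast_add]
  rfl

lemma sig_eq_stdAddChar_pairing (κ lam : Char) :
    sig κ lam = ψ (pairing (modTwo κ) (modTwo lam)) := by
  rw [pairing, ← ZModModule.sub_eq_add, sig, ← Int.cast_sub, ← stdAddChar_two_intCast]
  simp only [dotProduct, modTwo, Int.cast_sub, Int.cast_sum, Int.cast_mul]

/-- The odd characteristic `ν_{i+1}` modulo 2. -/
def oddPoint (i : Fin 6) : ModTwoChar (Fin 2) := modTwo (νodd i)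

lemma parity_oddPoint (i : Fin 6) : parity (oddPoint i) = 1 := by decide +revert

lemma oddPoint_injective : Injective oddPoint := by decide

lemma image_oddPoint : Finset.univ.image oddPoint = Finset.univ.filter (parity · = 1) := by decide

lemma sum_oddPoint : ∑ i, oddPoint i = 0 := by decide

lemma pairing_oddPoint_azygetic {i j k : Fin 6} (hij : i ≠ j) (hjk : j ≠ k) (hik : i ≠ k) :
    pairing (oddPoint i) (oddPoint j) + pairing (oddPoint i) (oddPoint k) +
      pairing (oddPoint j) (oddPoint k) = 1 := by
  decide +revert

lemma sum_pairing_oddPoint_mul_thetaQuartic (f : (Fin 2 → ZMod 2) → ℂ) (i : Fin 6)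
    (α : ModTwoChar (Fin 2)) :
    ∑ j, ψ (pairing (oddPoint i) (oddPoint j)) * thetaQuartic f (α + oddPoint j) =
      2 * thetaQuartic f (α + oddPoint i) := by
  have h := sum_odd_pairing_mul_thetaQuartic f (parity_oddPoint i) α
  rw [← image_oddPoint, Finset.sum_image oddPoint_injective.injOn, Fintype.card_fin] at h
  linear_combination h / 2

/-- The sum defining `Ξ₆` for the triad `ν_{k i}`, with the products running over the triad
`ν_{l m}`. -/
noncomputable def triadSum (k l : Fin 3 → Fin 6) (τ : Mat2) : ℂ :=
  ∑ i, ∑ j, if i < j then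
    sig (νodd (k i)) (νodd (k j)) *
      ∏ m, theta (addChar (addChar (νodd (k i)) (νodd (k j))) (νodd (l m))) τ ^ 4
  else 0

variable {k l : Fin 3 → Fin 6}

lemma sum_left_add_sum_right (h : Injective (Sum.elim k l)) {M : Type*} [AddCommMonoid M]
    (g : Fin 6 → M) : ∑ i, g (k i) + ∑ m, g (l m) = ∑ j, g j := by
  have hbij : Bijective (Sum.elim k l) := (Fintype.bijective_iff_injective_and_card _).2 ⟨h, rfl⟩
  rw [← hbij.sum_comp, Fintype.sum_sum_type]
  rfl

lemma sum_oddPoint_left_eq_right (h : Injective (Sum.elim k l)) :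
    ∑ i, oddPoint (k i) = ∑ m, oddPoint (l m) := by
  rw [← sub_eq_zero, ZModModule.sub_eq_add, sum_left_add_sum_right h, sum_oddPoint]

/-- The square of terms `⟨κᵢ|λₘ⟩ θ⁴[δ+κᵢ+λₘ]` attached to two complementary triads `κ`, `λ` with
common sum `δ`. -/
noncomputable def signedSquare (k l : Fin 3 → Fin 6) (f : (Fin 2 → ZMod 2) → ℂ) :
    Matrix (Fin 3) (Fin 3) ℂ :=
  .of fun i m => ψ (pairing (oddPoint (k i)) (oddPoint (l m))) *
    thetaQuartic f (∑ j, oddPoint (k j) + oddPoint (k i) + oddPoint (l m))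

lemma signedSquare_transpose (h : Injective (Sum.elim k l))
    (f : (Fin 2 → ZMod 2) → ℂ) : (signedSquare k l f)ᵀ = signedSquare l k f := by
  ext m i
  simp only [transpose_apply, signedSquare, of_apply]
  rw [pairing_comm, sum_oddPoint_left_eq_right h, add_right_comm]

lemma sum_signedSquare_row (h : Injective (Sum.elim k l))
    (f : (Fin 2 → ZMod 2) → ℂ) (i : Fin 3) :
    ∑ m, signedSquare k l f i m = thetaQuartic f (∑ j, oddPoint (k j)) := by
  set α := ∑ j, oddPoint (k j) + oddPoint (k i) with hα
  have hself : α + oddPoint (k i) = ∑ j, oddPoint (k j) := by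
    rw [hα, add_assoc, ZModModule.add_self, add_zero]
  have hleft : ∑ j, ψ (pairing (oddPoint (k i)) (oddPoint (k j))) *
      thetaQuartic f (α + oddPoint (k j)) = thetaQuartic f (∑ j, oddPoint (k j)) := by
    rw [Fintype.sum_eq_single i, pairing_self, AddChar.map_zero_eq_one, one_mul, hself]
    intro j hj
    obtain ⟨r, hr⟩ := exists_sum_add_add_eq_fin_three (fun j => oddPoint (k j)) hj
    rw [hr, thetaQuartic_eq_zero f (parity_oddPoint _), mul_zero]
  have hriemann := sum_pairing_oddPoint_mul_thetaQuartic f (k i) α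
  rw [← sum_left_add_sum_right h, hleft, hself] at hriemann
  change ∑ m, ψ (pairing (oddPoint (k i)) (oddPoint (l m))) *
    thetaQuartic f (α + oddPoint (l m)) = _
  linear_combination hriemann

lemma stdAddChar_pairing_eq_neg_prod (h : Injective (Sum.elim k l)) (i : Fin 3) :
    ψ (pairing (oddPoint (k (i + 1))) (oddPoint (k (i + 2)))) =
      -∏ m, ψ (pairing (oddPoint (k i)) (oddPoint (l m))) := by
  have hk : Injective k := h.comp Sum.inl_injective
  have hazygetic := pairing_oddPoint_azygetic (i := k i) (j := k (i + 1)) (k := k (i + 2))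
    (hk.ne (by decide +revert)) (hk.ne (by decide +revert)) (hk.ne (by decide +revert))
  have hprod : ∏ m, ψ (pairing (oddPoint (k i)) (oddPoint (l m))) =
      ψ (pairing (oddPoint (k i)) (oddPoint (k (i + 1))) +
        pairing (oddPoint (k i)) (oddPoint (k (i + 2)))) := by
    simp only [Fin.prod_univ_three, ← AddChar.map_add_eq_mul, ← pairing_add_right]
    rw [← Fin.sum_univ_three fun m => oddPoint (l m), ← sum_oddPoint_left_eq_right h,
      add_eq_sum_add_fin_three (fun j => oddPoint (k j)) i, pairing_add_right _ _ (oddPoint (k i)),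
      pairing_self, add_zero]
  rw [hprod, neg_eq_neg_one_mul, ← stdAddChar_two_one, ← hazygetic, ← AddChar.map_add_eq_mul,
    add_right_comm, ZModModule.add_self, zero_add]

lemma triadSum_eq_neg_sum_prod_signedSquare (h : Injective (Sum.elim k l)) {τ : Mat2}
    (hτ : τ ∈ SiegelH2) :
    triadSum k l τ = -∑ i, ∏ m, signedSquare k l (secondOrderTheta τ) i m := by
  have hterm (i j : Fin 3) : sig (νodd (k i)) (νodd (k j)) *
        ∏ m, theta (addChar (addChar (νodd (k i)) (νodd (k j))) (νodd (l m))) τ ^ 4 =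
      ψ (pairing (oddPoint (k i)) (oddPoint (k j))) * ∏ m, thetaQuartic (secondOrderTheta τ)
        (oddPoint (k i) + oddPoint (k j) + oddPoint (l m)) := by
    simp only [sig_eq_stdAddChar_pairing, theta_pow_four hτ, modTwo_addChar, oddPoint]
  simp only [triadSum, hterm]
  rw [sum_ite_lt_fin_three fun i j => by rw [pairing_comm, add_comm (oddPoint (k i))],
    ← Finset.sum_neg_distrib]
  refine Finset.sum_congr rfl fun i _ => ?_
  simp only [stdAddChar_pairing_eq_neg_prod h, signedSquare, of_apply, Finset.prod_mul_distrib,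
    add_eq_sum_add_fin_three (fun j => oddPoint (k j)) i, neg_mul]

theorem triadSum_comm (h : Injective (Sum.elim k l)) {τ : Mat2} (hτ : τ ∈ SiegelH2) :
    triadSum k l τ = triadSum l k τ := by
  have h' : Injective (Sum.elim l k) := by
    rw [← Sum.elim_swap]
    exact h.comp (Equiv.sumComm _ _).injective
  have hcol (m : Fin 3) : ∑ i, signedSquare k l (secondOrderTheta τ) i m =
      thetaQuartic (secondOrderTheta τ) (∑ j, oddPoint (k j)) := by
    rw [sum_oddPoint_left_eq_right h, ← sum_signedSquare_row h', ← signedSquare_transpose h]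
    rfl
  rw [triadSum_eq_neg_sum_prod_signedSquare h hτ, triadSum_eq_neg_sum_prod_signedSquare h' hτ,
    ← signedSquare_transpose h, sum_prod_rows_eq_sum_prod_cols_of_semimagic _ _
      (sum_signedSquare_row h _) hcol]
  rfl

end Triads

/-- `Ξ₆[δ]` is independent of the choice of triad: the complementary triad
also sums (mod 2) to `δ` and yields the same function. -/
theorem statement19 : ∀ d : Fin 10,
    addChar (addChar (νodd (triad d 3)) (νodd (triad d 4))) (νodd (triad d 5)) = δev d ∧
    ∀ τ ∈ SiegelH2,
      (∑ i : Fin 3, ∑ j : Fin 3,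
        if i < j then
          sig (νodd (triad d (⟨i.1 + 3, by omega⟩ : Fin 6)))
              (νodd (triad d (⟨j.1 + 3, by omega⟩ : Fin 6))) *
            ∏ m : Fin 3,
              theta (addChar (addChar (νodd (triad d (⟨i.1 + 3, by omega⟩ : Fin 6)))
                  (νodd (triad d (⟨j.1 + 3, by omega⟩ : Fin 6))))
                (νodd (triad d (Fin.castLE (by norm_num) m)))) τ ^ 4
        else 0) = Xi6 d τ := by
  intro d
  refine ⟨by decide +revert, fun τ hτ => ?_⟩
  have h : Injective (Sum.elim (fun m : Fin 3 => triad d ⟨m.1 + 3, by omega⟩)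
    fun i : Fin 3 => triad d (Fin.castLE (by norm_num) i)) := by decide +revert
  exact triadSum_comm h hτ

end TwoLoop
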